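/- arXiv:1712.05850 — 2 statements merged into one kernel-verified Lean document; each statement's English description precedes it below -/
import Mathlib

section
/- The matrix A satisfies A³ = 4^K · A; consequently every eigenvalue of A lies in the set {0, 2^K, −2^K}. -/
/-- The value ±1 associated to a Boolean sign. -/
noncomputable def sgn (b : Bool) : ℝ := if b then 1 else -1

/-- The `2^K × 2^K` matrix with rows and columns indexed by sign vectors
`u, v ∈ {−1,1}^K` (encoded as `Fin K → Bool`), with entries
`A_{u,v} = Σ_{m=1}^K (−1)^m u_m v_m`. -/
noncomputable def volcanoA (K : ℕ) : Matrix (Fin K → Bool) (Fin K → Bool) ℝ :=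
  Matrix.of fun u v => ∑ m : Fin K, (-1 : ℝ) ^ ((m : ℕ) + 1) * sgn (u m) * sgn (v m)

/-!
Let `S` be the matrix whose rows are all the sign vectors. Flipping one coordinate shows that
distinct columns of `S` are orthogonal, so `Sᵀ * S` is the scalar `2 ^ K`. Since `A = S * D * Sᵀ`
with `D` a diagonal matrix of signs, `A ^ 3 = 4 ^ K • (S * D ^ 3 * Sᵀ)`, and `D ^ 3 = D`. Every
`μ` in the spectrum of `A` then satisfies `μ ^ 3 = (2 ^ K) ^ 2 * μ`.
-/

open Matrix

open Polynomial in
theorem eq_zero_or_eq_or_eq_neg_of_pow_three_eq_of_mem_spectrum {𝕜 R : Type*} [Field 𝕜]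
    [Ring R] [Algebra 𝕜 R] {a : R} {c μ : 𝕜} (ha : a ^ 3 = c ^ 2 • a) (hμ : μ ∈ spectrum 𝕜 a) :
    μ = 0 ∨ μ = c ∨ μ = -c := by
  rcases subsingleton_or_nontrivial R with _ | _
  · simp [spectrum.of_subsingleton] at hμ
  have hp : aeval a (X ^ 3 - c ^ 2 • X : 𝕜[X]) = 0 := by simp [ha]
  have hroot : μ ^ 3 - c ^ 2 * μ = 0 := by
    have heval := spectrum.subset_polynomial_aeval a (X ^ 3 - c ^ 2 • X) ⟨μ, hμ, rfl⟩
    rw [hp, spectrum.zero_eq] at heval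
    simpa using heval
  have hfactor : μ * ((μ - c) * (μ + c)) = 0 := by linear_combination hroot
  simpa only [mul_eq_zero, sub_eq_zero, add_eq_zero_iff_eq_neg] using hfactor

theorem mul_mul_pow_succ_of_mul_eq_smul_one {m n R : Type*} [Fintype m] [DecidableEq m]
    [Fintype n] [DecidableEq n] [CommSemiring R] {U : Matrix m n R} {V : Matrix n m R} {c : R}
    (hVU : V * U = c • (1 : Matrix n n R)) (D : Matrix n n R) (k : ℕ) :
    (U * D * V) ^ (k + 1) = c ^ k • (U * D ^ (k + 1) * V) := by
  induction k with
  | zero => simp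
  | succ k ih =>
    calc (U * D * V) ^ (k + 2)
        = c ^ k • (U * D ^ (k + 1) * (V * U) * D * V) := by
          rw [pow_succ, ih]; simp only [Matrix.mul_assoc, Matrix.smul_mul]
      _ = c ^ (k + 1) • (U * D ^ (k + 2) * V) := by
          rw [hVU, pow_succ D (k + 1)]
          simp only [Matrix.mul_smul, Matrix.smul_mul, Matrix.mul_one, smul_smul, pow_succ,
            Matrix.mul_assoc]

section Signs

theorem sgn_mul_self (b : Bool) : sgn b * sgn b = 1 := by cases b <;> simp [sgn]

theorem sgn_not (b : Bool) : sgn (!b) = -sgn b := by cases b <;> simp [sgn]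

variable {ι : Type*} [Fintype ι] [DecidableEq ι]

theorem sum_sgn_mul_sgn_of_ne {i j : ι} (hij : i ≠ j) :
    ∑ u : ι → Bool, sgn (u i) * sgn (u j) = 0 := by
  refine Finset.sum_involution (fun u _ => Function.update u i (!u i)) ?cancel ?moved ?mem ?invol
  case cancel => simp [Function.update_of_ne hij.symm, sgn_not]
  case moved => simp
  case mem => simp
  case invol => simp

/-- The matrix whose rows are all the sign vectors indexed by `ι`, with signs encoded as booleans;
its columns are the coordinate functions on the cube `{−1,1}^ι`. -/
noncomputable def signMatrix (ι : Type*) : Matrix (ι → Bool) ι ℝ :=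
  Matrix.of fun u i => sgn (u i)

theorem signMatrix_transpose_mul_self :
    (signMatrix ι)ᵀ * signMatrix ι = (2 : ℝ) ^ Fintype.card ι • (1 : Matrix ι ι ℝ) := by
  ext i j
  rcases eq_or_ne i j with rfl | hij
  · simp [signMatrix, Matrix.mul_apply, sgn_mul_self]
  · simp [signMatrix, Matrix.mul_apply, sum_sgn_mul_sgn_of_ne hij, hij]

theorem volcanoA_eq_signMatrix_mul_diagonal_mul_transpose (K : ℕ) :
    volcanoA K = signMatrix (Fin K) * diagonal (fun m : Fin K => (-1 : ℝ) ^ ((m : ℕ) + 1)) *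
      (signMatrix (Fin K))ᵀ := by
  ext u v
  simp only [volcanoA, signMatrix, of_apply, mul_apply (M := _ * _), mul_diagonal, transpose_apply,
    mul_comm (sgn (u _))]

theorem diagonal_neg_one_pow_pow_three {R : Type*} [Ring R] (f : ι → ℕ) :
    diagonal (fun i => (-1 : R) ^ f i) ^ 3 = diagonal fun i => (-1 : R) ^ f i := by
  rw [diagonal_pow]
  congr 1
  ext i
  rw [Pi.pow_apply, pow_right_comm, Odd.neg_one_pow (by decide)]

theorem stmt3_general (D : Matrix ι ι ℝ) (hD : D ^ 3 = D) :
    (signMatrix ι * D * (signMatrix ι)ᵀ) ^ 3 =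
        (4 : ℝ) ^ Fintype.card ι • (signMatrix ι * D * (signMatrix ι)ᵀ) ∧
      ∀ μ ∈ spectrum ℝ (signMatrix ι * D * (signMatrix ι)ᵀ),
        μ = 0 ∨ μ = 2 ^ Fintype.card ι ∨ μ = -(2 ^ Fintype.card ι) := by
  have hcube := mul_mul_pow_succ_of_mul_eq_smul_one signMatrix_transpose_mul_self D 2
  rw [hD] at hcube
  have hfour : ((2 : ℝ) ^ Fintype.card ι) ^ 2 = 4 ^ Fintype.card ι := by
    rw [pow_right_comm]; norm_num
  exact ⟨hfour ▸ hcube,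
    fun _ => eq_zero_or_eq_or_eq_neg_of_pow_three_eq_of_mem_spectrum hcube⟩

end Signs

/-- `A³ = 4^K · A`; consequently every (real) eigenvalue of `A` lies in
`{0, 2^K, −2^K}`. -/
theorem stmt3 (K : ℕ) (hK : 0 < K) (hKeven : Even K) :
    volcanoA K ^ 3 = (4 : ℝ) ^ K • volcanoA K ∧
      ∀ μ ∈ spectrum ℝ (volcanoA K), μ = 0 ∨ μ = 2 ^ K ∨ μ = -(2 ^ K) := by
  simpa only [volcanoA_eq_signMatrix_mul_diagonal_mul_transpose, Fintype.card_fin] using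
    stmt3_general _ (diagonal_neg_one_pow_pow_three fun m : Fin K => (m : ℕ) + 1)
end

section
/- With γ = μ²/σ² and μ ≥ 0, the product of the first and negative-first moments of the azimuthally symmetric two-dimensional distribution with radial profile h satisfies M_{+1} M_{−1} = (∫₀^∞ r² h(r) dr) · (∫₀^∞ h(r) dr) / (∫₀^∞ r h(r) dr)² = (π/2) · (1 + γ) / [ e^{−γ/2} + √(πγ/2) · Erf(√(γ/2)) ]². -/
/-- The fitted radial density
`h(r) = (2/√(2πσ²)) · exp(−(μ² + r²)/(2σ²)) · cosh(μ r / σ²)`. -/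
noncomputable def hdens (μ σ : ℝ) (r : ℝ) : ℝ :=
  (2 / Real.sqrt (2 * Real.pi * σ ^ 2)) * Real.exp (-(μ ^ 2 + r ^ 2) / (2 * σ ^ 2)) *
    Real.cosh (μ * r / σ ^ 2)

/-- The error function `Erf(x) = (2/√π) ∫₀^x e^{−t²} dt`. -/
noncomputable def erf (x : ℝ) : ℝ :=
  (2 / Real.sqrt Real.pi) * ∫ t in (0 : ℝ)..x, Real.exp (-t ^ 2)

open MeasureTheory ProbabilityTheory Filter Set
open scoped Topology NNReal

/-
The profile `h` is the density of `|X|` for a normal variable `X` with mean `μ` and variance `σ²`: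
it folds the Gaussian density `φ` at `0`. The three integrals are therefore `E[X²] = μ² + σ²`,
`E[1] = 1` and `E|X|`, and only the last one needs work. With `v = σ²`, the function
`(x - a) φ(x)` has the antiderivative `-v φ(x) + (μ - a) Erf((x - μ) / √(2v)) / 2`, and integrating
it over both sides of `a` gives `E|X - a| = 2 v φ(a) + (μ - a) Erf((μ - a) / √(2v))`.
-/

lemma erf_neg (x : ℝ) : erf (-x) = -erf x := by
  have reflect : ∫ t in (0 : ℝ)..-x, Real.exp (-t ^ 2) = ∫ t in x..0, Real.exp (-t ^ 2) := by
    rw [← neg_zero, ← intervalIntegral.integral_comp_neg]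
    simp only [neg_sq, neg_zero]
  rw [erf, erf, reflect, intervalIntegral.integral_symm, mul_neg]

lemma abs_mul_erf_abs (x : ℝ) : |x| * erf |x| = x * erf x := by
  rcases abs_choice x with h | h <;> simp [h, erf_neg]

lemma hasDerivAt_erf (x : ℝ) :
    HasDerivAt erf (2 / √Real.pi * Real.exp (-x ^ 2)) x := by
  have hcont : Continuous fun t : ℝ ↦ Real.exp (-t ^ 2) := by fun_prop
  exact (hcont.integral_hasStrictDerivAt 0 x).hasDerivAt.const_mul _

lemma tendsto_erf_atTop : Tendsto erf atTop (𝓝 1) := by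
  have hint : IntegrableOn (fun t : ℝ ↦ Real.exp (-t ^ 2)) (Ioi 0) := by
    simpa using (integrable_exp_neg_mul_sq one_pos).integrableOn
  have hval : ∫ t in Ioi (0 : ℝ), Real.exp (-t ^ 2) = √Real.pi / 2 := by
    simpa using integral_gaussian_Ioi 1
  have h := (intervalIntegral_tendsto_integral_Ioi 0 hint tendsto_id).const_mul (2 / √Real.pi)
  rwa [hval, div_mul_div_cancel₀ (by positivity), div_self two_ne_zero] at h

lemma tendsto_erf_atBot : Tendsto erf atBot (𝓝 (-1)) := by
  simpa [Function.comp_def, erf_neg] using (tendsto_erf_atTop.comp tendsto_neg_atBot_atTop).neg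

lemma integral_Ioi_zero_add_comp_neg {E : Type*} [NormedAddCommGroup E] [NormedSpace ℝ E]
    {f : ℝ → E} (hf : Integrable f) : ∫ x in Ioi (0 : ℝ), (f x + f (-x)) = ∫ x, f x := by
  rw [integral_add hf.integrableOn hf.comp_neg.integrableOn, integral_comp_neg_Ioi, neg_zero,
    add_comm]
  exact intervalIntegral.integral_Iic_add_Ioi hf.integrableOn hf.integrableOn

lemma integral_mul_abs_sub {f : ℝ → ℝ} {a : ℝ} (hf : Integrable fun x ↦ f x * (x - a)) :
    ∫ x, f x * |x - a| =
      (∫ x in Ioi a, f x * (x - a)) - ∫ x in Iic a, f x * (x - a) := by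
  have h_right : EqOn (fun x ↦ f x * (x - a)) (fun x ↦ f x * |x - a|) (Ioi a) :=
    fun x hx ↦ by simp only [abs_of_pos (sub_pos.2 (mem_Ioi.1 hx))]
  have h_left : EqOn (fun x ↦ -(f x * (x - a))) (fun x ↦ f x * |x - a|) (Iic a) :=
    fun x hx ↦ by simp only [abs_of_nonpos (sub_nonpos.2 (mem_Iic.1 hx)), mul_neg]
  rw [← intervalIntegral.integral_Iic_add_Ioi (b := a)
      (hf.neg.integrableOn.congr_fun h_left measurableSet_Iic)
      (hf.integrableOn.congr_fun h_right measurableSet_Ioi),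
    ← setIntegral_congr_fun measurableSet_Iic h_left,
    ← setIntegral_congr_fun measurableSet_Ioi h_right, integral_neg, neg_add_eq_sub]

lemma gaussianPDFReal_eq_exp_neg_sq (μ : ℝ) (v : ℝ≥0) (x : ℝ) :
    gaussianPDFReal μ v x =
      (√Real.pi * √(2 * v))⁻¹ * Real.exp (-((x - μ) / √(2 * v)) ^ 2) := by
  rw [gaussianPDFReal, div_pow, Real.sq_sqrt (by positivity), ← Real.sqrt_mul Real.pi_nonneg,
    neg_div]
  congr 3
  ring_nf

lemma hasDerivAt_gaussianPDFReal (μ : ℝ) (v : ℝ≥0) (x : ℝ) :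
    HasDerivAt (gaussianPDFReal μ v) (-((x - μ) / v) * gaussianPDFReal μ v x) x := by
  have hexp : HasDerivAt (fun y : ℝ ↦ -(y - μ) ^ 2 / (2 * v)) (-((x - μ) / v)) x := by
    convert! (((hasDerivAt_id x).sub_const μ).pow 2).neg.div_const (2 * (v : ℝ)) using 1
    simp only [id_eq]
    ring
  convert! hexp.exp.const_mul (√(2 * Real.pi * v))⁻¹ using 1
  rw [gaussianPDFReal]
  ring

lemma hasDerivAt_erf_sub_div_sqrt (μ : ℝ) (v : ℝ≥0) (x : ℝ) :
    HasDerivAt (fun y ↦ erf ((y - μ) / √(2 * v))) (2 * gaussianPDFReal μ v x) x := by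
  have hlin : HasDerivAt (fun y : ℝ ↦ (y - μ) / √(2 * v)) (1 / √(2 * v)) x :=
    ((hasDerivAt_id x).sub_const μ).div_const _
  convert! (hasDerivAt_erf _).comp x hlin using 1
  rw [gaussianPDFReal_eq_exp_neg_sq]
  ring

lemma tendsto_gaussianPDFReal_cocompact (μ : ℝ) (v : ℝ≥0) :
    Tendsto (gaussianPDFReal μ v) (cocompact ℝ) (𝓝 0) := by
  obtain rfl | hv := eq_or_ne v 0
  · rw [gaussianPDFReal_zero_var]
    exact tendsto_const_nhds
  have hexp : Tendsto (fun x : ℝ ↦ Real.exp (-(2 * v : ℝ)⁻¹ * x ^ 2)) (cocompact ℝ) (𝓝 0) := by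
    simpa only [Real.rpow_zero, one_mul] using
      tendsto_rpow_abs_mul_exp_neg_mul_sq_cocompact (by positivity : 0 < (2 * v : ℝ)⁻¹) 0
  have hshift : Tendsto (fun x : ℝ ↦ x + -μ) (cocompact ℝ) (cocompact ℝ) :=
    (Homeomorph.addRight (-μ)).isClosedEmbedding.tendsto_cocompact
  convert! (hexp.comp hshift).const_mul (√(2 * Real.pi * v))⁻¹ using 1
  · ext x
    rw [gaussianPDFReal, Function.comp_apply]
    ring_nf
  · rw [mul_zero]

lemma integral_sq_gaussianReal (μ : ℝ) (v : ℝ≥0) :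
    ∫ x, x ^ 2 ∂gaussianReal μ v = μ ^ 2 + v := by
  have h := variance_eq_sub (memLp_id_gaussianReal (μ := μ) (v := v) 2)
  simp only [variance_id_gaussianReal, Pi.pow_apply, id_eq, integral_id_gaussianReal] at h
  linarith

section NonzeroVariance

variable {v : ℝ≥0}

lemma tendsto_erf_sub_div_sqrt_atTop (hv : v ≠ 0) (μ : ℝ) :
    Tendsto (fun x ↦ erf ((x - μ) / √(2 * v))) atTop (𝓝 1) :=
  tendsto_erf_atTop.comp <|
    (tendsto_atTop_add_const_right _ (-μ) tendsto_id).atTop_div_const (by positivity)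

lemma tendsto_erf_sub_div_sqrt_atBot (hv : v ≠ 0) (μ : ℝ) :
    Tendsto (fun x ↦ erf ((x - μ) / √(2 * v))) atBot (𝓝 (-1)) :=
  tendsto_erf_atBot.comp <|
    (tendsto_atBot_add_const_right _ (-μ) tendsto_id).atBot_div_const (by positivity)

lemma integrable_gaussianReal_iff (hv : v ≠ 0) {μ : ℝ} {g : ℝ → ℝ} :
    Integrable g (gaussianReal μ v) ↔ Integrable fun x ↦ gaussianPDFReal μ v x * g x := by
  rw [gaussianReal_of_var_ne_zero μ hv, integrable_withDensity_iff_integrable_smul'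
    (measurable_gaussianPDF μ v) (ae_of_all _ fun _ ↦ gaussianPDF_lt_top)]
  simp only [toReal_gaussianPDF, smul_eq_mul]

lemma integral_abs_sub_gaussianReal (hv : v ≠ 0) (μ a : ℝ) :
    ∫ x, |x - a| ∂gaussianReal μ v =
      2 * v * gaussianPDFReal μ v a + (μ - a) * erf ((μ - a) / √(2 * v)) := by
  let F : ℝ → ℝ := fun x ↦
    -v * gaussianPDFReal μ v x + (μ - a) / 2 * erf ((x - μ) / √(2 * v))
  have hF (x : ℝ) : HasDerivAt F (gaussianPDFReal μ v x * (x - a)) x := by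
    convert! ((hasDerivAt_gaussianPDFReal μ v x).const_mul (-(v : ℝ))).add
      ((hasDerivAt_erf_sub_div_sqrt μ v x).const_mul ((μ - a) / 2)) using 1
    field_simp
    ring
  have hF_top : Tendsto F atTop (𝓝 ((μ - a) / 2)) := by
    simpa only [mul_zero, zero_add, mul_one, mul_neg] using
      (((tendsto_gaussianPDFReal_cocompact μ v).mono_left atTop_le_cocompact).const_mul
        (-(v : ℝ))).add ((tendsto_erf_sub_div_sqrt_atTop hv μ).const_mul ((μ - a) / 2))
  have hF_bot : Tendsto F atBot (𝓝 (-((μ - a) / 2))) := by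
    simpa only [mul_zero, zero_add, mul_one, mul_neg] using
      (((tendsto_gaussianPDFReal_cocompact μ v).mono_left atBot_le_cocompact).const_mul
        (-(v : ℝ))).add ((tendsto_erf_sub_div_sqrt_atBot hv μ).const_mul ((μ - a) / 2))
  have hint : Integrable fun x ↦ gaussianPDFReal μ v x * (x - a) :=
    (integrable_gaussianReal_iff hv).1 <|
      ((memLp_id_gaussianReal 1).integrable le_rfl).sub (integrable_const a)
  have hF_a : F a =
      -v * gaussianPDFReal μ v a - (μ - a) / 2 * erf ((μ - a) / √(2 * v)) := by
    simp only [F, ← neg_sub μ a, neg_div, erf_neg]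
    ring
  simp only [integral_gaussianReal_eq_integral_smul hv, smul_eq_mul]
  rw [integral_mul_abs_sub hint,
    integral_Ioi_of_hasDerivAt_of_tendsto' (fun x _ ↦ hF x) hint.integrableOn hF_top,
    integral_Iic_of_hasDerivAt_of_tendsto' (fun x _ ↦ hF x) hint.integrableOn hF_bot, hF_a]
  ring

lemma integral_abs_gaussianReal (hv : v ≠ 0) {μ γ : ℝ} (hγ : γ = μ ^ 2 / v) :
    ∫ x, |x| ∂gaussianReal μ v =
      √(2 * v / Real.pi) * (Real.exp (-γ / 2) + √(Real.pi * γ / 2) * erf √(γ / 2)) := by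
  set s := √(2 * (v : ℝ)) with hs
  have hs_pos : 0 < s := by positivity
  have hs_sq : s ^ 2 = 2 * v := Real.sq_sqrt (by positivity)
  have hγ_sq : γ / 2 = (μ / s) ^ 2 := by
    rw [hγ, div_pow, hs_sq, div_div, mul_comm]
  have hpdf : gaussianPDFReal μ v 0 = (√Real.pi * s)⁻¹ * Real.exp (-γ / 2) := by
    rw [gaussianPDFReal_eq_exp_neg_sq, neg_div, hγ_sq, zero_sub, neg_div, neg_sq]
  have herf : μ * erf (μ / s) = s * (√(γ / 2) * erf √(γ / 2)) := by
    rw [hγ_sq, Real.sqrt_sq_eq_abs, abs_mul_erf_abs, ← mul_assoc, mul_div_cancel₀ _ hs_pos.ne']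
  have hmean := integral_abs_sub_gaussianReal hv μ 0
  simp only [sub_zero] at hmean
  rw [hmean, ← hs, hpdf, herf, ← hs_sq, mul_div_assoc, Real.sqrt_mul Real.pi_nonneg,
    Real.sqrt_div (sq_nonneg s), Real.sqrt_sq hs_pos.le]
  field_simp

end NonzeroVariance

lemma hdens_eq_gaussianPDFReal_add (μ σ r : ℝ) :
    hdens μ σ r =
      gaussianPDFReal μ (σ ^ 2).toNNReal r + gaussianPDFReal μ (σ ^ 2).toNNReal (-r) := by
  have hpos : -(r - μ) ^ 2 / (2 * σ ^ 2) =
      -(μ ^ 2 + r ^ 2) / (2 * σ ^ 2) + μ * r / σ ^ 2 := by ring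
  have hneg : -(-r - μ) ^ 2 / (2 * σ ^ 2) =
      -(μ ^ 2 + r ^ 2) / (2 * σ ^ 2) + -(μ * r / σ ^ 2) := by ring
  rw [hdens, gaussianPDFReal, gaussianPDFReal, Real.coe_toNNReal _ (sq_nonneg σ), hpos, hneg,
    Real.exp_add, Real.exp_add, Real.cosh_eq]
  ring

lemma integral_Ioi_mul_hdens {μ σ : ℝ} (hσ : σ ≠ 0) {g : ℝ → ℝ} (hg : g.Even)
    (hint : Integrable g (gaussianReal μ (σ ^ 2).toNNReal)) :
    ∫ r in Ioi (0 : ℝ), g r * hdens μ σ r = ∫ x, g x ∂gaussianReal μ (σ ^ 2).toNNReal := by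
  have hv : (σ ^ 2).toNNReal ≠ 0 := by positivity
  simp only [integral_gaussianReal_eq_integral_smul hv, smul_eq_mul]
  rw [← integral_Ioi_zero_add_comp_neg ((integrable_gaussianReal_iff hv).1 hint)]
  congr with r
  rw [hdens_eq_gaussianPDFReal_add, hg r]
  ring

lemma integral_Ioi_hdens {μ σ : ℝ} (hσ : σ ≠ 0) : ∫ r in Ioi (0 : ℝ), hdens μ σ r = 1 := by
  simpa using integral_Ioi_mul_hdens (μ := μ) hσ (g := fun _ ↦ 1) (fun _ ↦ rfl)
    (integrable_const 1)

lemma integral_Ioi_sq_mul_hdens {μ σ : ℝ} (hσ : σ ≠ 0) :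
    ∫ r in Ioi (0 : ℝ), r ^ 2 * hdens μ σ r = μ ^ 2 + σ ^ 2 := by
  rw [integral_Ioi_mul_hdens hσ (g := fun r ↦ r ^ 2) neg_sq (memLp_id_gaussianReal 2).integrable_sq,
    integral_sq_gaussianReal, Real.coe_toNNReal _ (sq_nonneg σ)]

lemma integral_Ioi_id_mul_hdens {μ σ γ : ℝ} (hσ : σ ≠ 0) (hγ : γ = μ ^ 2 / σ ^ 2) :
    ∫ r in Ioi (0 : ℝ), r * hdens μ σ r =
      √(2 * σ ^ 2 / Real.pi) *
        (Real.exp (-γ / 2) + √(Real.pi * γ / 2) * erf √(γ / 2)) := by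
  have hvar : ((σ ^ 2).toNNReal : ℝ) = σ ^ 2 := Real.coe_toNNReal _ (sq_nonneg σ)
  have habs : ∫ r in Ioi (0 : ℝ), r * hdens μ σ r = ∫ r in Ioi (0 : ℝ), |r| * hdens μ σ r :=
    setIntegral_congr_fun measurableSet_Ioi fun r hr ↦ by simp only [abs_of_pos (mem_Ioi.1 hr)]
  rw [habs, integral_Ioi_mul_hdens hσ abs_neg ((memLp_id_gaussianReal 1).integrable le_rfl).abs,
    integral_abs_gaussianReal (by positivity) (hγ.trans (by rw [hvar])), hvar]

theorem stmt15_general (μ σ γ : ℝ) (hσ : σ ≠ 0) (hγ : γ = μ ^ 2 / σ ^ 2) :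
    (∫ r in Set.Ioi (0 : ℝ), r ^ 2 * hdens μ σ r) * (∫ r in Set.Ioi (0 : ℝ), hdens μ σ r) /
        (∫ r in Set.Ioi (0 : ℝ), r * hdens μ σ r) ^ 2 =
      (Real.pi / 2) * (1 + γ) /
        (Real.exp (-γ / 2) + Real.sqrt (Real.pi * γ / 2) * erf (Real.sqrt (γ / 2))) ^ 2 := by
  have hnum : (μ ^ 2 + σ ^ 2) / (2 * σ ^ 2 / Real.pi) = Real.pi / 2 * (1 + γ) := by
    rw [hγ]
    field_simp
    ring
  rw [integral_Ioi_sq_mul_hdens hσ, integral_Ioi_hdens hσ, integral_Ioi_id_mul_hdens hσ hγ,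
    mul_one, mul_pow, Real.sq_sqrt (by positivity), ← div_div, hnum]

/-- With `γ = μ²/σ²` and `μ ≥ 0`, the product of the first and negative-first
moments of the azimuthally symmetric 2D distribution with radial profile `h`
satisfies
`M₊₁ M₋₁ = (∫₀^∞ r² h)(∫₀^∞ h)/(∫₀^∞ r h)² = (π/2)(1+γ)/[e^{−γ/2} + √(πγ/2) Erf(√(γ/2))]²`. -/
theorem stmt15 (μ σ γ : ℝ) (hμ : 0 ≤ μ) (hσ : 0 < σ) (hγ : γ = μ ^ 2 / σ ^ 2) :
    (∫ r in Set.Ioi (0 : ℝ), r ^ 2 * hdens μ σ r) * (∫ r in Set.Ioi (0 : ℝ), hdens μ σ r) /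
        (∫ r in Set.Ioi (0 : ℝ), r * hdens μ σ r) ^ 2 =
      (Real.pi / 2) * (1 + γ) /
        (Real.exp (-γ / 2) + Real.sqrt (Real.pi * γ / 2) * erf (Real.sqrt (γ / 2))) ^ 2 :=
  stmt15_general μ σ γ hσ.ne' hγ
end
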